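/- Let D ≥ 2, let u be a unit vector in ℝ^D, and let θ ∈ [0, π/2]. Then the Lebesgue volume of the hyperspherical sector {w ∈ ℝ^D : ‖w‖ ≤ 1, w ≠ 0, ∠(w,u) ≤ θ} equals (1/2)·V(B_1)·I_{sin²θ}((D−1)/2, 1/2), where V(B_1) is the volume of the D-dimensional unit ball. -/

import Mathlib

open scoped RealInnerProductSpace
open MeasureTheory

/-- The regularized incomplete beta function
`I_x(a,b) = (∫_0^x t^(a-1) (1-t)^(b-1) dt) * Γ(a+b) / (Γ(a) Γ(b))`. -/
noncomputable def regIncompleteBeta (x a b : ℝ) : ℝ :=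
  (∫ t in (0:ℝ)..x, t ^ (a - 1) * (1 - t) ^ (b - 1)) *
    (Real.Gamma (a + b) / (Real.Gamma a * Real.Gamma b))

/-!
In spherical coordinates with polar axis `u`, the volume element is `r ^ (D - 1) * sin φ ^ (D - 2)`
up to a constant, where `φ = ∠(w, u)`. The radial factor and the constant cancel in the ratio of
the volume of the sector to that of the ball, which is the sector of colatitude `π`; so this ratio
is `∫ sin ^ (D - 2)` over `[0, θ]` divided by the same integral over `[0, π]`. The substitution
`t = sin² φ` turns the numerator into an incomplete beta integral and half the denominator into
the corresponding complete one.
-/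

section Trigonometric

open Real Set

lemma image_sin_sq_Ioo {θ : ℝ} (hθ0 : 0 ≤ θ) (hθ : θ ≤ π / 2) :
    (fun φ => sin φ ^ 2) '' Ioo 0 θ = Ioo 0 (sin θ ^ 2) := by
  have sq_lt {φ ψ : ℝ} (hφ : 0 ≤ φ) (hφψ : φ < ψ) (hψ : ψ ≤ π / 2) : sin φ ^ 2 < sin ψ ^ 2 :=
    pow_lt_pow_left₀ (sin_lt_sin_of_lt_of_le_pi_div_two (by linarith) hψ hφψ)
      (sin_nonneg_of_nonneg_of_le_pi hφ (by linarith [pi_pos])) two_ne_zero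
  apply Subset.antisymm
  · rintro _ ⟨φ, hφ, rfl⟩
    exact ⟨by simpa using sq_lt le_rfl hφ.1 (hφ.2.le.trans hθ), sq_lt hφ.1.le hφ.2 hθ⟩
  · intro t ht
    exact intermediate_value_Ioo hθ0 (f := fun φ => sin φ ^ 2) (by fun_prop) (by simpa using ht)

lemma integral_rpow_mul_one_sub_rpow_sin_sq (a b : ℝ) {θ : ℝ} (hθ0 : 0 ≤ θ) (hθ : θ ≤ π / 2) :
    ∫ t in (0:ℝ)..sin θ ^ 2, t ^ (a - 1) * (1 - t) ^ (b - 1) =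
      2 * ∫ φ in (0:ℝ)..θ, sin φ ^ (2 * a - 1) * cos φ ^ (2 * b - 1) := by
  have sin_pos {φ : ℝ} (hφ : φ ∈ Ioo 0 θ) : 0 < sin φ :=
    sin_pos_of_pos_of_lt_pi hφ.1 (by linarith [hφ.2, pi_pos])
  have cos_pos {φ : ℝ} (hφ : φ ∈ Ioo 0 θ) : 0 < cos φ :=
    cos_pos_of_mem_Ioo ⟨by linarith [hφ.1, pi_pos], by linarith [hφ.2]⟩
  have monotone_sq : MonotoneOn (fun φ => sin φ ^ 2) (Ioo 0 θ) := fun φ hφ ψ hψ hφψ =>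
    pow_le_pow_left₀ (sin_pos hφ).le
      (sin_le_sin_of_le_of_le_pi_div_two (by linarith [hφ.1, pi_pos]) (by linarith [hψ.2]) hφψ) 2
  have sq_rpow {x : ℝ} (hx : 0 < x) (c : ℝ) : x * (x ^ 2) ^ (c - 1) = x ^ (2 * c - 1) := by
    rw [← rpow_natCast_mul hx.le, mul_comm, ← rpow_add_one hx.ne']
    congr 1
    push_cast
    ring
  rw [intervalIntegral.integral_of_le (by positivity), intervalIntegral.integral_of_le hθ0,
    integral_Ioc_eq_integral_Ioo, integral_Ioc_eq_integral_Ioo, ← image_sin_sq_Ioo hθ0 hθ,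
    integral_image_eq_integral_deriv_smul_of_monotoneOn (f' := fun φ => 2 * sin φ * cos φ)
      measurableSet_Ioo _ monotone_sq, ← integral_const_mul]
  · refine setIntegral_congr_fun measurableSet_Ioo fun φ hφ => ?_
    simp only [smul_eq_mul, ← cos_sq', ← sq_rpow (sin_pos hφ), ← sq_rpow (cos_pos hφ)]
    ring
  · intro φ _
    simpa using ((hasDerivAt_sin φ).fun_pow 2).hasDerivWithinAt

lemma integral_rpow_mul_one_sub_rpow {a b : ℝ} (ha : 0 < a) (hb : 0 < b) :
    ∫ t in (0:ℝ)..1, t ^ (a - 1) * (1 - t) ^ (b - 1) = Gamma a * Gamma b / Gamma (a + b) := by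
  rw [← ProbabilityTheory.beta, ProbabilityTheory.beta_eq_betaIntegralReal a b ha hb,
    Complex.betaIntegral, ← Complex.ofReal_re (∫ t in (0:ℝ)..1, _),
    ← intervalIntegral.integral_ofReal]
  congr 1
  refine intervalIntegral.integral_congr fun t ht => ?_
  rw [uIcc_of_le zero_le_one] at ht
  push_cast [Complex.ofReal_cpow ht.1, Complex.ofReal_cpow (sub_nonneg.2 ht.2)]
  rfl

lemma regIncompleteBeta_eq_integral_div_integral {a b : ℝ} (ha : 0 < a) (hb : 0 < b) (x : ℝ) :
    regIncompleteBeta x a b = (∫ t in (0:ℝ)..x, t ^ (a - 1) * (1 - t) ^ (b - 1)) /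
      ∫ t in (0:ℝ)..1, t ^ (a - 1) * (1 - t) ^ (b - 1) := by
  rw [regIncompleteBeta, integral_rpow_mul_one_sub_rpow ha hb, div_eq_mul_inv _ (_ / _), inv_div]

lemma integral_sin_pow_zero_pi_div_two (n : ℕ) :
    ∫ φ in (0:ℝ)..π / 2, sin φ ^ n = (∫ φ in (0:ℝ)..π, sin φ ^ n) / 2 := by
  calc ∫ φ in (0:ℝ)..π / 2, sin φ ^ n
      = ∫ φ in (0:ℝ)..π / 2, cos φ ^ n := by
        simpa [sin_pi_div_two_sub] using (intervalIntegral.integral_comp_sub_left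
          (fun φ => sin φ ^ n) (π / 2) (a := 0) (b := π / 2)).symm
    _ = (∫ φ in (0:ℝ)..π, sin φ ^ n) / 2 := by
        rw [EulerSine.integral_cos_pow_eq, one_div_mul_eq_div]

lemma half_regIncompleteBeta_sin_sq (n : ℕ) {θ : ℝ} (hθ0 : 0 ≤ θ) (hθ : θ ≤ π / 2) :
    1 / 2 * regIncompleteBeta (sin θ ^ 2) (((n : ℝ) + 1) / 2) (1 / 2) =
      (∫ φ in (0:ℝ)..θ, sin φ ^ n) / ∫ φ in (0:ℝ)..π, sin φ ^ n := by
  have integral_eq {ψ : ℝ} (hψ0 : 0 ≤ ψ) (hψ : ψ ≤ π / 2) :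
      ∫ t in (0:ℝ)..sin ψ ^ 2, t ^ (((n : ℝ) + 1) / 2 - 1) * (1 - t) ^ ((1 / 2 : ℝ) - 1) =
        2 * ∫ φ in (0:ℝ)..ψ, sin φ ^ n := by
    simp [integral_rpow_mul_one_sub_rpow_sin_sq _ _ hψ0 hψ, mul_div_cancel₀]
  have complete := integral_eq pi_div_two_pos.le le_rfl
  rw [sin_pi_div_two, one_pow, integral_sin_pow_zero_pi_div_two] at complete
  rw [regIncompleteBeta_eq_integral_div_integral (by positivity) (by positivity),
    integral_eq hθ0 hθ, complete]
  field_simp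

lemma lintegral_sin_pow (n : ℕ) {θ : ℝ} (hθ0 : 0 ≤ θ) (hθ : θ ≤ π) :
    ∫⁻ φ in Iic θ ∩ Ioo 0 π, ENNReal.ofReal (sin φ ^ n) =
      ENNReal.ofReal (∫ φ in (0:ℝ)..θ, sin φ ^ n) := by
  have inter_ae_eq : (Iic θ ∩ Ioo 0 π : Set ℝ) =ᵐ[volume] Ioc 0 θ := by
    have : Iic θ ∩ Ioc 0 π = Ioc 0 θ := by rw [inter_comm, Ioc_inter_Iic, min_eq_right hθ]
    exact this ▸ (ae_eq_refl (Iic θ)).inter Ioo_ae_eq_Ioc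
  rw [setLIntegral_congr inter_ae_eq, intervalIntegral.integral_of_le hθ0,
    ofReal_integral_eq_lintegral_ofReal (by fun_prop : Continuous _).integrableOn_Ioc]
  refine (ae_restrict_iff' measurableSet_Ioc).2 (.of_forall fun φ hφ => ?_)
  exact pow_nonneg (sin_nonneg_of_nonneg_of_le_pi hφ.1.le (hφ.2.trans hθ)) n

end Trigonometric

section SphericalCoordinates

open Set Real InnerProductGeometry
open scoped ENNReal

lemma lintegral_fun_norm_addHaar {E : Type*} [NormedAddCommGroup E] [NormedSpace ℝ E]
    [FiniteDimensional ℝ E] [Nontrivial E] [MeasurableSpace E] [BorelSpace E]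
    (μ : Measure E) [μ.IsAddHaarMeasure] {f : ℝ → ℝ≥0∞} (hf : Measurable f) :
    ∫⁻ x, f ‖x‖ ∂μ = μ.toSphere univ *
      ∫⁻ r in Ioi 0, ENNReal.ofReal (r ^ (Module.finrank ℝ E - 1)) * f r := by
  calc ∫⁻ x, f ‖x‖ ∂μ
      = ∫⁻ x : ({0}ᶜ : Set E), f ‖x.1‖ ∂μ.comap (↑) := by
        rw [lintegral_subtype_comap (measurableSet_singleton _).compl fun x => f ‖x‖,
          restrict_compl_singleton]
    _ = ∫⁻ p, f p.2 ∂μ.toSphere.prod (.volumeIoiPow (Module.finrank ℝ E - 1)) := by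
        simpa using μ.measurePreserving_homeomorphUnitSphereProd.lintegral_comp
          (f := fun p => f p.2) (by fun_prop)
    _ = μ.toSphere univ * ∫⁻ r : Ioi (0 : ℝ), f r ∂.volumeIoiPow (Module.finrank ℝ E - 1) := by
        rw [lintegral_prod _ (by fun_prop)]
        simp only [lintegral_const, mul_comm]
    _ = _ := by
        rw [Measure.volumeIoiPow, lintegral_withDensity_eq_lintegral_mul _ (by fun_prop)
          (by fun_prop)]
        congr 1
        exact lintegral_subtype_comap measurableSet_Ioi
          fun r => ENNReal.ofReal (r ^ (Module.finrank ℝ E - 1)) * f r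

lemma lintegral_polarCoord_upperHalfPlane (f : ℝ × ℝ → ℝ≥0∞) :
    ∫⁻ p in univ ×ˢ Ioi 0, f p =
      ∫⁻ p in Ioi 0 ×ˢ Ioo 0 π, ENNReal.ofReal p.1 * f (p.1 * cos p.2, p.1 * sin p.2) := by
  have sin_pos_iff {φ : ℝ} (hφ : φ ∈ Ioo (-π) π) : 0 < sin φ ↔ 0 < φ :=
    ⟨fun h => lt_of_not_ge fun h0 => (sin_nonpos_of_nonpos_of_neg_pi_le h0 hφ.1.le).not_gt h,
      fun h => sin_pos_of_pos_of_lt_pi h hφ.2⟩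
  have upper_target : (univ ×ˢ Ioi 0 ∩ polarCoord.target : Set (ℝ × ℝ)) = Ioi 0 ×ˢ Ioo 0 π := by
    rw [polarCoord_target, prod_inter_prod, univ_inter, inter_comm (Ioi 0), Ioo_inter_Ioi,
      max_eq_right (by linarith [pi_pos])]
  rw [← lintegral_indicator (MeasurableSet.univ.prod measurableSet_Ioi),
    ← lintegral_comp_polarCoord_symm, ← upper_target,
    ← setLIntegral_indicator (MeasurableSet.univ.prod measurableSet_Ioi)]
  refine setLIntegral_congr_fun polarCoord.open_target.measurableSet fun p hp => ?_
  simp [indicator, mul_pos_iff_of_pos_left hp.1.out, sin_pos_iff hp.2]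

lemma lintegral_fun_fst_norm_snd {α F : Type*} [MeasurableSpace α] (ν : Measure α) [SFinite ν]
    [NormedAddCommGroup F] [NormedSpace ℝ F] [FiniteDimensional ℝ F] [Nontrivial F]
    [MeasurableSpace F] [BorelSpace F] (μ : Measure F) [μ.IsAddHaarMeasure]
    {f : α × ℝ → ℝ≥0∞} (hf : Measurable f) :
    ∫⁻ p, f (p.1, ‖p.2‖) ∂ν.prod μ = μ.toSphere univ *
      ∫⁻ p in univ ×ˢ Ioi 0, ENNReal.ofReal (p.2 ^ (Module.finrank ℝ F - 1)) * f p
        ∂ν.prod volume := by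
  rw [lintegral_prod _ (by fun_prop), setLIntegral_prod _ (by fun_prop), Measure.restrict_univ,
    ← lintegral_const_mul _ (by fun_prop)]
  exact lintegral_congr fun x => lintegral_fun_norm_addHaar μ (f := fun t => f (x, t)) (by fun_prop)

variable {E : Type*} [NormedAddCommGroup E] [InnerProductSpace ℝ E]

lemma norm_smul_add_orthogonal {u : E} (hu : ‖u‖ = 1) (s : ℝ) (y : (ℝ ∙ u)ᗮ) :
    ‖s • u + y‖ = √(s ^ 2 + ‖y‖ ^ 2) := by
  have inner_zero : ⟪s • u, (y : E)⟫ = 0 := by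
    rw [real_inner_smul_left, Submodule.mem_orthogonal_singleton_iff_inner_right.1 y.2, mul_zero]
  rw [norm_add_eq_sqrt_iff_real_inner_eq_zero.2 inner_zero]
  simp [norm_smul, hu, ← sq]

lemma angle_smul_add_orthogonal {u : E} (hu : ‖u‖ = 1) (s : ℝ) (y : (ℝ ∙ u)ᗮ) :
    angle (s • u + y) u = arccos (s / √(s ^ 2 + ‖y‖ ^ 2)) := by
  rw [angle, norm_smul_add_orthogonal hu, hu, mul_one, inner_add_left, real_inner_smul_left,
    real_inner_self_eq_norm_sq, hu, Submodule.mem_orthogonal_singleton_iff_inner_left.1 y.2]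
  simp

variable [FiniteDimensional ℝ E] [MeasurableSpace E] [BorelSpace E]

lemma measurable_norm_angle (u : E) : Measurable fun w : E => (‖w‖, angle w u) := by
  unfold angle
  fun_prop

lemma measurePreserving_smul_add_orthogonal {u : E} (hu : ‖u‖ = 1) :
    MeasurePreserving (fun p : ℝ × (ℝ ∙ u)ᗮ => p.1 • u + p.2) := by
  have axis := (LinearIsometryEquiv.toSpanUnitSingleton (𝕜 := ℝ) u hu).measurePreserving
  have decomposition := (Submodule.span ℝ {u}).orthogonalDecomposition.symm.measurePreserving
  rw [Measure.volume_eq_prod]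
  convert (decomposition.comp (WithLp.volume_preserving_toLp _ _)).comp
    (axis.prod (MeasurePreserving.id volume)) using 1
  ext p
  simp

lemma lintegral_fun_norm_angle {u : E} (hu : ‖u‖ = 1) (hE : 2 ≤ Module.finrank ℝ E)
    {f : ℝ × ℝ → ℝ≥0∞} (hf : Measurable f) :
    ∫⁻ w : E, f (‖w‖, angle w u) = (volume : Measure (ℝ ∙ u)ᗮ).toSphere univ *
      ∫⁻ p in Ioi 0 ×ˢ Ioo 0 π, ENNReal.ofReal (p.1 ^ (Module.finrank ℝ E - 1)) *
        ENNReal.ofReal (sin p.2 ^ (Module.finrank ℝ E - 2)) * f p := by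
  have finrank_orthogonal : Module.finrank ℝ (ℝ ∙ u)ᗮ = Module.finrank ℝ E - 1 := by
    have := (ℝ ∙ u).finrank_add_finrank_orthogonal
    rw [finrank_span_singleton (ne_zero_of_norm_ne_zero (by simp [hu]))] at this
    omega
  have : Nontrivial (ℝ ∙ u)ᗮ := Module.nontrivial_of_finrank_pos (R := ℝ) (by omega)
  let g : ℝ × ℝ → ℝ≥0∞ := fun q => f (√(q.1 ^ 2 + q.2 ^ 2), arccos (q.1 / √(q.1 ^ 2 + q.2 ^ 2)))
  have g_polar {p : ℝ × ℝ} (hp : p ∈ Ioi 0 ×ˢ Ioo 0 π) :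
      g (p.1 * cos p.2, p.1 * sin p.2) = f p := by
    have sqrt_eq : √((p.1 * cos p.2) ^ 2 + (p.1 * sin p.2) ^ 2) = p.1 := by
      rw [mul_pow, mul_pow, ← mul_add, cos_sq_add_sin_sq, mul_one, sqrt_sq hp.1.out.le]
    simp only [g, sqrt_eq, mul_div_cancel_left₀ _ hp.1.out.ne', arccos_cos hp.2.1.le hp.2.2.le]
  calc ∫⁻ w : E, f (‖w‖, angle w u)
      = ∫⁻ p : ℝ × (ℝ ∙ u)ᗮ, g (p.1, ‖p.2‖) := by
        simpa only [Function.comp_apply, norm_smul_add_orthogonal hu,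
          angle_smul_add_orthogonal hu] using
          ((measurePreserving_smul_add_orthogonal hu).lintegral_comp
            (hf.comp (measurable_norm_angle u))).symm
    _ = (volume : Measure (ℝ ∙ u)ᗮ).toSphere univ *
          ∫⁻ p in univ ×ˢ Ioi 0, ENNReal.ofReal (p.2 ^ (Module.finrank ℝ E - 2)) * g p := by
        rw [Measure.volume_eq_prod, lintegral_fun_fst_norm_snd _ _ (by fun_prop),
          finrank_orthogonal, Nat.sub_sub, one_add_one_eq_two, ← Measure.volume_eq_prod]
    _ = _ := by
        rw [lintegral_polarCoord_upperHalfPlane]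
        congr 1
        refine setLIntegral_congr_fun (measurableSet_Ioi.prod measurableSet_Ioo) fun p hp => ?_
        simp only [g_polar hp]
        have hr := hp.1.out.le
        rw [← mul_assoc, mul_pow, ENNReal.ofReal_mul (by positivity), ← mul_assoc,
          ← ENNReal.ofReal_mul hr, ← pow_succ', show Module.finrank ℝ E - 2 + 1 =
            Module.finrank ℝ E - 1 by omega]

lemma volume_norm_mem_angle_mem {u : E} (hu : ‖u‖ = 1) (hE : 2 ≤ Module.finrank ℝ E)
    {R Φ : Set ℝ} (hR : MeasurableSet R) (hΦ : MeasurableSet Φ) :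
    volume {w : E | ‖w‖ ∈ R ∧ angle w u ∈ Φ} = (volume : Measure (ℝ ∙ u)ᗮ).toSphere univ *
      ((∫⁻ r in R ∩ Ioi 0, ENNReal.ofReal (r ^ (Module.finrank ℝ E - 1))) *
        ∫⁻ φ in Φ ∩ Ioo 0 π, ENNReal.ofReal (sin φ ^ (Module.finrank ℝ E - 2))) := by
  have hRΦ := hR.prod hΦ
  let radial : ℝ → ℝ≥0∞ := fun r => ENNReal.ofReal (r ^ (Module.finrank ℝ E - 1))
  let angular : ℝ → ℝ≥0∞ := fun φ => ENNReal.ofReal (sin φ ^ (Module.finrank ℝ E - 2))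
  calc volume {w : E | ‖w‖ ∈ R ∧ angle w u ∈ Φ}
      = ∫⁻ w : E, (R ×ˢ Φ).indicator 1 (‖w‖, angle w u) :=
        (lintegral_indicator_one (measurable_norm_angle u hRΦ)).symm
    _ = (volume : Measure (ℝ ∙ u)ᗮ).toSphere univ * ∫⁻ p in Ioi 0 ×ˢ Ioo 0 π,
          (R ×ˢ Φ).indicator (fun p => radial p.1 * angular p.2) p := by
        rw [lintegral_fun_norm_angle hu hE (measurable_one.indicator hRΦ)]
        simp [indicator, radial, angular]
    _ = _ := by
        rw [setLIntegral_indicator hRΦ, prod_inter_prod, Measure.volume_eq_prod,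
          ← Measure.prod_restrict, lintegral_prod_mul (by fun_prop) (by fun_prop)]

lemma volume_norm_mem_angle_le {u : E} (hu : u ≠ 0) (hE : 2 ≤ Module.finrank ℝ E)
    {R : Set ℝ} (hR : MeasurableSet R) {θ : ℝ} (hθ0 : 0 ≤ θ) (hθ : θ ≤ π) :
    volume {w : E | ‖w‖ ∈ R ∧ angle w u ≤ θ} =
      ENNReal.ofReal ((∫ φ in (0:ℝ)..θ, sin φ ^ (Module.finrank ℝ E - 2)) /
        ∫ φ in (0:ℝ)..π, sin φ ^ (Module.finrank ℝ E - 2)) * volume {w : E | ‖w‖ ∈ R} := by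
  set I : ℝ → ℝ := fun ψ => ∫ φ in (0:ℝ)..ψ, sin φ ^ (Module.finrank ℝ E - 2)
  have norm_unit : ‖‖u‖⁻¹ • u‖ = 1 := norm_smul_inv_norm (𝕜 := ℝ) hu
  let c : ℝ≥0∞ := (volume : Measure (ℝ ∙ (‖u‖⁻¹ • u))ᗮ).toSphere univ *
    ∫⁻ r in R ∩ Ioi 0, ENNReal.ofReal (r ^ (Module.finrank ℝ E - 1))
  have volume_eq {ψ : ℝ} (hψ0 : 0 ≤ ψ) (hψ : ψ ≤ π) :
      volume {w : E | ‖w‖ ∈ R ∧ angle w u ≤ ψ} = c * ENNReal.ofReal (I ψ) := by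
    rw [← lintegral_sin_pow _ hψ0 hψ, mul_assoc]
    simpa only [angle_smul_right_of_pos _ u (inv_pos.2 (norm_pos_iff.2 hu)), mem_Iic] using
      volume_norm_mem_angle_mem norm_unit hE hR (measurableSet_Iic (a := ψ))
  have volume_all : volume {w : E | ‖w‖ ∈ R} = c * ENNReal.ofReal (I π) := by
    simpa [angle_le_pi] using volume_eq pi_pos.le le_rfl
  have I_pi_pos : 0 < I π := integral_sin_pow_pos _
  rw [volume_eq hθ0 hθ, volume_all, mul_left_comm, ← ENNReal.ofReal_mul' I_pi_pos.le,
    div_mul_cancel₀ _ I_pi_pos.ne']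

end SphericalCoordinates

theorem stmt_3_general {E : Type*} [NormedAddCommGroup E] [InnerProductSpace ℝ E]
    [FiniteDimensional ℝ E] [MeasurableSpace E] [BorelSpace E] (hE : 2 ≤ Module.finrank ℝ E)
    {u : E} (hu : u ≠ 0) {θ : ℝ} (hθ0 : 0 ≤ θ) (hθ : θ ≤ Real.pi / 2) :
    volume {w : E | ‖w‖ ≤ 1 ∧ w ≠ 0 ∧ InnerProductGeometry.angle w u ≤ θ} =
    ENNReal.ofReal ((1 / 2) *
        regIncompleteBeta (Real.sin θ ^ 2) (((Module.finrank ℝ E : ℝ) - 1) / 2) (1 / 2)) *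
      volume (Metric.closedBall (0 : E) 1) := by
  have : Nontrivial E := ⟨u, 0, hu⟩
  have sector_diff_zero : {w : E | ‖w‖ ≤ 1 ∧ w ≠ 0 ∧ InnerProductGeometry.angle w u ≤ θ} =
      {w : E | ‖w‖ ∈ Set.Iic 1 ∧ InnerProductGeometry.angle w u ≤ θ} \ {0} := by
    ext w
    simp only [Set.mem_ofPred_eq, Set.mem_sdiff, Set.mem_singleton_iff, Set.mem_Iic]
    tauto
  have closedBall_eq : Metric.closedBall (0 : E) 1 = {w : E | ‖w‖ ∈ Set.Iic 1} := by
    ext w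
    simp
  obtain ⟨n, hn⟩ := Nat.exists_eq_add_of_le' hE
  rw [sector_diff_zero, measure_sdiff_null (measure_singleton _), closedBall_eq,
    volume_norm_mem_angle_le hu hE measurableSet_Iic hθ0 (by linarith [Real.pi_pos]), hn,
    show (((n + 2 : ℕ) : ℝ) - 1) / 2 = ((n : ℝ) + 1) / 2 by push_cast; ring,
    half_regIncompleteBeta_sin_sq n hθ0 hθ, Nat.add_sub_cancel]

/-- the Lebesgue volume of the hyperspherical sector of colatitude `θ`
around a unit vector `u` equals `(1/2) · V(B₁) · I_{sin²θ}((D-1)/2, 1/2)`. -/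
theorem stmt_3 (D : ℕ) (hD : 2 ≤ D)
    (u : EuclideanSpace ℝ (Fin D)) (hu : ‖u‖ = 1)
    (θ : ℝ) (hθ0 : 0 ≤ θ) (hθ1 : θ ≤ Real.pi / 2) :
    volume {w : EuclideanSpace ℝ (Fin D) |
        ‖w‖ ≤ 1 ∧ w ≠ 0 ∧ InnerProductGeometry.angle w u ≤ θ} =
    ENNReal.ofReal ((1 / 2) * regIncompleteBeta (Real.sin θ ^ 2) (((D : ℝ) - 1) / 2) (1 / 2))
      * volume (Metric.closedBall (0 : EuclideanSpace ℝ (Fin D)) 1) := by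
  simpa using stmt_3_general (E := EuclideanSpace ℝ (Fin D)) (by simpa using hD)
    (ne_zero_of_norm_ne_zero (by simp [hu] : ‖u‖ ≠ 0)) hθ0 hθ1
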